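/- Let K ⊂ ℝ^d satisfy b_K ⊆ K ⊆ B_K for concentric balls with diam(b_K)/diam(B_K) ≥ c₀ > 0, and let h_K = diam(K). Then for all u in the space |x − x_K|²ℙ^{p−2}(K) (shifted so the balls are centered at x_K) there holds the two-sided bound ‖Δu‖²_{L²(K)} ≃ h_K^{−2}‖∇u‖²_{L²(K)} + h_K^{−4}‖u‖²_{L²(K)}, with equivalence constants depending only on d, p and c₀. -/

import Mathlib

open MeasureTheory

/-- Componentwise Laplacian of a function on Euclidean space. -/
noncomputable def lap {d : ℕ} (f : EuclideanSpace ℝ (Fin d) → ℝ)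
    (x : EuclideanSpace ℝ (Fin d)) : ℝ :=
  ∑ i : Fin d,
    fderiv ℝ (fun y => fderiv ℝ f y (EuclideanSpace.single i 1)) x (EuclideanSpace.single i 1)

/-- Squared norm of the gradient of a function on Euclidean space. -/
noncomputable def gradSq {d : ℕ} (f : EuclideanSpace ℝ (Fin d) → ℝ)
    (x : EuclideanSpace ℝ (Fin d)) : ℝ :=
  ∑ i : Fin d, (fderiv ℝ f x (EuclideanSpace.single i 1)) ^ 2

/-!
On `|x|² ℙ` the Laplacian is injective: multiplication by `|x|²` is adjoint to `Δ` for the Fischer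
inner product of polynomials, so `P = |x|² q` with `ΔP = 0` has `⟨P, P⟩ = ⟨q, ΔP⟩ = 0`. Hence
`‖ΔP‖` is a norm on this space, and on a finite-dimensional subspace it is equivalent to the `H¹`
norm, even if the two are taken over different balls about the origin. Dilation to a ball of
radius `r` produces the powers of `r`. The element lies between two concentric balls, so the
smaller one bounds its integrals from below and the larger one from above; its diameter is
comparable to `r`.
-/

open MvPolynomial
open scoped Pointwise

section Fischer

variable {σ R : Type*}

theorem prod_factorial_add_single [CommSemiring R] (m : σ →₀ ℕ) (i : σ) :
    ((m + Finsupp.single i 1).prod fun _ k => (k.factorial : R)) =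
      (m i + 1) * m.prod fun _ k => (k.factorial : R) := by
  rw [← Finsupp.mul_prod_erase' (m + _) i _ (by simp), ← Finsupp.mul_prod_erase' m i _ (by simp),
    Finsupp.erase_add, Finsupp.erase_single, add_zero, ← mul_assoc]
  simp [Nat.factorial_succ]

/-- The Fischer inner product of polynomials: monomials are orthogonal, and `x ^ m` has square
norm `∏ i, (m i)!`. Multiplication by `X i` is adjoint to `∂ᵢ` for it. -/
noncomputable def fischerForm [CommSemiring R] :
    MvPolynomial σ R →ₗ[R] MvPolynomial σ R →ₗ[R] R :=
  (basisMonomials σ R).constr R fun m => (m.prod fun _ k => (k.factorial : R)) • lcoeff R m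

theorem fischerForm_monomial [CommSemiring R] (m : σ →₀ ℕ) (a : R) (q : MvPolynomial σ R) :
    fischerForm (monomial m a) q = a * ((m.prod fun _ k => (k.factorial : R)) * coeff m q) := by
  have h : monomial m a = a • basisMonomials σ R m := by simp [smul_monomial]
  rw [h, fischerForm, map_smul, Module.Basis.constr_basis]
  simp

theorem fischerForm_X_mul [CommSemiring R] (i : σ) (p q : MvPolynomial σ R) :
    fischerForm (X i * p) q = fischerForm p (pderiv i q) := by
  induction p using MvPolynomial.induction_on' with
  | monomial m a =>
    rw [mul_comm, ← pow_one (X i), ← monomial_add_single, fischerForm_monomial,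
      fischerForm_monomial, coeff_pderiv, prod_factorial_add_single]
    ring
  | add p₁ p₂ h₁ h₂ => simp only [mul_add, map_add, LinearMap.add_apply, h₁, h₂]

theorem fischerForm_eq_sum [CommSemiring R] (p q : MvPolynomial σ R) :
    fischerForm p q =
      ∑ m ∈ p.support, coeff m p * ((m.prod fun _ k => (k.factorial : R)) * coeff m q) := by
  conv_lhs => rw [p.as_sum, map_sum, LinearMap.sum_apply]
  simp only [fischerForm_monomial]

theorem fischerForm_self_eq_zero [CommRing R] [LinearOrder R] [IsStrictOrderedRing R]
    {p : MvPolynomial σ R} : fischerForm p p = 0 ↔ p = 0 := by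
  refine ⟨fun h => ?_, by rintro rfl; simp⟩
  have hw (m : σ →₀ ℕ) : 0 < m.prod fun _ k => (k.factorial : R) :=
    Finset.prod_pos fun i _ => Nat.cast_pos.2 (Nat.factorial_pos _)
  simp only [fischerForm_eq_sum, mul_left_comm (coeff _ p)] at h
  rw [Finset.sum_eq_zero_iff_of_nonneg fun m _ =>
    mul_nonneg (hw m).le (mul_self_nonneg (coeff m p))] at h
  refine support_eq_empty.1 (Finset.eq_empty_of_forall_notMem fun m hm => ?_)
  simpa [(hw m).ne', mem_support_iff.1 hm] using h m hm

/-- The squared Euclidean norm `∑ᵢ xᵢ²` as a polynomial. -/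
noncomputable def normSqPoly (σ R : Type*) [Fintype σ] [CommSemiring R] : MvPolynomial σ R :=
  ∑ i, X i ^ 2

/-- The Laplacian `∑ᵢ ∂ᵢ²` acting on polynomials. -/
noncomputable def lapPoly [Fintype σ] [CommSemiring R] :
    MvPolynomial σ R →ₗ[R] MvPolynomial σ R :=
  ∑ i, (pderiv i).toLinearMap ∘ₗ (pderiv i).toLinearMap

theorem lapPoly_apply [Fintype σ] [CommSemiring R] (p : MvPolynomial σ R) :
    lapPoly p = ∑ i, pderiv i (pderiv i p) := by
  simp [lapPoly]

theorem fischerForm_normSqPoly_mul [Fintype σ] [CommSemiring R] (p q : MvPolynomial σ R) :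
    fischerForm (normSqPoly σ R * p) q = fischerForm p (lapPoly q) := by
  simp only [normSqPoly, sq, lapPoly_apply, Finset.sum_mul, mul_assoc, map_sum,
    LinearMap.sum_apply, fischerForm_X_mul]

theorem normSqPoly_mul_eq_zero_of_lapPoly_eq_zero [Fintype σ] [CommRing R] [LinearOrder R]
    [IsStrictOrderedRing R] {q : MvPolynomial σ R} (h : lapPoly (normSqPoly σ R * q) = 0) :
    normSqPoly σ R * q = 0 := by
  rw [← fischerForm_self_eq_zero, fischerForm_normSqPoly_mul, h, map_zero]

theorem totalDegree_normSqPoly_le [Fintype σ] [CommSemiring R] :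
    (normSqPoly σ R).totalDegree ≤ 2 :=
  totalDegree_finsetSum_le fun i _ => by
    rw [X_pow_eq_monomial]
    exact (totalDegree_monomial_le _ _).trans (by simp)

end Fischer

section AffineSubstitution

variable {σ R : Type*} [CommSemiring R]

/-- The polynomial `x ↦ p (r x + c)`: the pullback of `p` from the ball of radius `r` about `c`
to the unit ball. -/
noncomputable def affineSubst (r : R) (c : σ → R) : MvPolynomial σ R →ₐ[R] MvPolynomial σ R :=
  aeval fun i => C r * X i + C (c i)

theorem eval_affineSubst (r : R) (c x : σ → R) (p : MvPolynomial σ R) :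
    eval x (affineSubst r c p) = eval (r • x + c) p := by
  rw [affineSubst, ← coe_aeval_eq_eval, ← coe_aeval_eq_eval, RingHom.coe_coe, RingHom.coe_coe,
    comp_aeval_apply]
  congr 2
  ext i
  simp

theorem totalDegree_aeval_le {f : σ → MvPolynomial σ R} (hf : ∀ i, (f i).totalDegree ≤ 1)
    (p : MvPolynomial σ R) : (aeval f p).totalDegree ≤ p.totalDegree := by
  rw [aeval_def, eval₂_eq]
  refine totalDegree_finsetSum_le fun m hm => (totalDegree_mul _ _).trans ?_
  rw [algebraMap_eq, totalDegree_C, zero_add]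
  refine (totalDegree_finsetProd _ _).trans (le_trans (Finset.sum_le_sum fun i _ => ?_)
    (le_totalDegree hm))
  exact (totalDegree_pow _ _).trans ((Nat.mul_le_mul_left _ (hf i)).trans_eq (mul_one _))

theorem totalDegree_affineSubst_le (r : R) (c : σ → R) (p : MvPolynomial σ R) :
    (affineSubst r c p).totalDegree ≤ p.totalDegree := by
  refine totalDegree_aeval_le (fun i => (totalDegree_add _ _).trans (max_le ?_ ?_)) p
  · rw [C_mul_X_eq_monomial]
    exact (totalDegree_monomial_le _ _).trans (by simp)
  · simp

theorem pderiv_affineSubst (r : R) (c : σ → R) (i : σ) (p : MvPolynomial σ R) :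
    pderiv i (affineSubst r c p) = r • affineSubst r c (pderiv i p) := by
  induction p using MvPolynomial.induction_on with
  | C a => simp [affineSubst, algebraMap_eq]
  | add p q hp hq => simp only [map_add, hp, hq, smul_add]
  | mul_X p j hp =>
    have hX : pderiv i (affineSubst r c (X j)) = r • affineSubst r c (pderiv i (X j)) := by
      rcases eq_or_ne j i with rfl | h
      · simp [affineSubst, smul_eq_C_mul]
      · simp [affineSubst, pderiv_X_of_ne h]
    simp only [map_mul, pderiv_mul, hp, hX, map_add, smul_add, smul_mul_assoc, mul_smul_comm]

variable [Fintype σ]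

theorem lapPoly_affineSubst (r : R) (c : σ → R) (p : MvPolynomial σ R) :
    lapPoly (affineSubst r c p) = r ^ 2 • affineSubst r c (lapPoly p) := by
  simp only [lapPoly_apply, pderiv_affineSubst, Derivation.map_smul, smul_smul, map_sum,
    Finset.smul_sum, sq]

theorem affineSubst_affineSubst_neg_normSqPoly {R : Type*} [CommRing R] (r : R) (c : σ → R) :
    affineSubst r c (affineSubst 1 (-c) (normSqPoly σ R)) = r ^ 2 • normSqPoly σ R := by
  simp [affineSubst, normSqPoly, mul_pow, Finset.smul_sum, smul_eq_C_mul]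

end AffineSubstitution

section FormComparison

theorem exists_apply_self_le_mul_norm_sq {V : Type*} [NormedAddCommGroup V] [NormedSpace ℝ V]
    [FiniteDimensional ℝ V] (A : LinearMap.BilinForm ℝ V) :
    ∃ C : ℝ, 0 < C ∧ ∀ v, A v v ≤ C * ‖v‖ ^ 2 := by
  let A' := LinearMap.toContinuousBilinearMap A
  refine ⟨‖A'‖ + 1, by positivity, fun v => ?_⟩
  calc A v v ≤ ‖A'‖ * ‖v‖ * ‖v‖ := (le_abs_self _).trans (A'.le_opNorm₂ v v)
    _ = ‖A'‖ * ‖v‖ ^ 2 := by ring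
    _ ≤ (‖A'‖ + 1) * ‖v‖ ^ 2 := by gcongr; simp

theorem exists_apply_self_le_of_posDef {V : Type*} [AddCommGroup V] [Module ℝ V]
    [Module.Finite ℝ V] (A : LinearMap.BilinForm ℝ V) {B : LinearMap.BilinForm ℝ V}
    (hsymm : B.IsSymm) (hpos : ∀ v, v ≠ 0 → 0 < B v v) :
    ∃ C : ℝ, 0 < C ∧ ∀ v, A v v ≤ C * B v v := by
  have hnonneg (v : V) : 0 ≤ B v v := by
    rcases eq_or_ne v 0 with rfl | hv
    · simp
    · exact (hpos v hv).le
  let core : InnerProductSpace.Core ℝ V :=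
    { inner := fun v w => B v w
      conj_inner_symm := fun v w => hsymm.eq w v
      re_inner_nonneg := hnonneg
      add_left := by simp
      smul_left := by simp
      definite := fun v hv => by_contra fun h => (hpos v h).ne' hv }
  obtain ⟨C, hC, hA⟩ := @exists_apply_self_le_mul_norm_sq V core.toNormedAddCommGroup
    (InnerProductSpace.ofCore core.toCore).toNormedSpace _ A
  refine ⟨C, hC, fun v => (hA v).trans_eq ?_⟩
  exact congrArg (C * ·) (Real.sq_sqrt (hnonneg v))

end FormComparison

section EuclideanEval

variable {ι : Type*}

theorem continuous_eval_ofLp (p : MvPolynomial ι ℝ) :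
    Continuous fun x : EuclideanSpace ℝ ι => eval x.ofLp p :=
  (MvPolynomial.continuous_eval p).comp (PiLp.continuous_ofLp 2 _)

variable [Fintype ι]

theorem eval_ofLp_normSqPoly (x : EuclideanSpace ℝ ι) :
    eval x.ofLp (normSqPoly ι ℝ) = ‖x‖ ^ 2 := by
  simp [EuclideanSpace.real_norm_sq_eq, normSqPoly]

theorem hasFDerivAt_eval_ofLp (p : MvPolynomial ι ℝ) (x : EuclideanSpace ℝ ι) :
    HasFDerivAt (fun y : EuclideanSpace ℝ ι => eval y.ofLp p)
      (∑ i, eval x.ofLp (pderiv i p) • (EuclideanSpace.proj i : _ →L[ℝ] ℝ)) x := by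
  classical
  induction p using MvPolynomial.induction_on with
  | C a => simpa using hasFDerivAt_const a x
  | add p q hp hq =>
    simp only [eval_add]
    exact (hp.fun_add hq).congr_fderiv (by simp [add_smul, Finset.sum_add_distrib])
  | mul_X p i hp =>
    have hX : HasFDerivAt (fun y : EuclideanSpace ℝ ι => y.ofLp i)
        (EuclideanSpace.proj i : _ →L[ℝ] ℝ) x :=
      (EuclideanSpace.proj i : EuclideanSpace ℝ ι →L[ℝ] ℝ).hasFDerivAt
    simp only [eval_mul, eval_X]
    refine (hp.fun_mul hX).congr_fderiv ?_
    ext v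
    simp [pderiv_X, Pi.single_apply, mul_add, Finset.sum_add_distrib, Finset.mul_sum,
      apply_ite, mul_comm, mul_left_comm]

theorem fderiv_eval_ofLp_single {ι : Type*} [Finite ι] [DecidableEq ι] (p : MvPolynomial ι ℝ)
    (x : EuclideanSpace ℝ ι) (i : ι) :
    fderiv ℝ (fun y : EuclideanSpace ℝ ι => eval y.ofLp p) x (EuclideanSpace.single i 1) =
      eval x.ofLp (pderiv i p) := by
  cases nonempty_fintype ι
  simp [(hasFDerivAt_eval_ofLp p x).fderiv, PiLp.single_apply]

theorem lap_eval_ofLp {d : ℕ} (p : MvPolynomial (Fin d) ℝ) (x : EuclideanSpace ℝ (Fin d)) :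
    lap (fun y => eval y.ofLp p) x = eval x.ofLp (lapPoly p) := by
  simp only [lap, fderiv_eval_ofLp_single, lapPoly_apply, map_sum]

theorem gradSq_eval_ofLp {d : ℕ} (p : MvPolynomial (Fin d) ℝ) (x : EuclideanSpace ℝ (Fin d)) :
    gradSq (fun y => eval y.ofLp p) x = ∑ i, eval x.ofLp (pderiv i p) ^ 2 := by
  simp only [gradSq, fderiv_eval_ofLp_single]

theorem gradSq_nonneg {d : ℕ} (f : EuclideanSpace ℝ (Fin d) → ℝ) (x : EuclideanSpace ℝ (Fin d)) :
    0 ≤ gradSq f x :=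
  Finset.sum_nonneg fun _ _ => sq_nonneg _

theorem exists_mem_ball_eval_ofLp_ne_zero {ρ : ℝ} (hρ : 0 < ρ) {p : MvPolynomial ι ℝ}
    (hp : p ≠ 0) : ∃ x ∈ Metric.ball (0 : EuclideanSpace ℝ ι) ρ, eval x.ofLp p ≠ 0 := by
  by_contra! h
  have hU : WithLp.toLp 2 ⁻¹' Metric.ball (0 : EuclideanSpace ℝ ι) ρ ∈ nhds (0 : ι → ℝ) :=
    (PiLp.continuous_toLp 2 _).continuousAt.preimage_mem_nhds
      (by simpa using Metric.ball_mem_nhds _ hρ)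
  obtain ⟨ε, hε, hsub⟩ := Metric.mem_nhds_iff.1 hU
  refine hp (MvPolynomial.funext_set (fun _ => Metric.ball 0 ε) (fun _ => ?_) fun x hx => ?_)
  · rw [Real.ball_eq_Ioo]
    exact Set.Ioo_infinite (by linarith)
  · rw [← ball_pi _ hε] at hx
    simpa using h _ (hsub hx)

end EuclideanEval

section BallForm

variable {ι : Type*} [Fintype ι]

/-- The `L²` inner product of polynomials over the ball of radius `ρ` about the origin. -/
noncomputable def ballForm (ι : Type*) [Fintype ι] (ρ : ℝ) :
    LinearMap.BilinForm ℝ (MvPolynomial ι ℝ) :=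
  have hint (p q : MvPolynomial ι ℝ) : IntegrableOn
      (fun x : EuclideanSpace ℝ ι => eval x.ofLp p * eval x.ofLp q) (Metric.closedBall 0 ρ) :=
    ((continuous_eval_ofLp p).mul (continuous_eval_ofLp q)).continuousOn.integrableOn_compact
      (isCompact_closedBall _ _)
  LinearMap.mk₂ ℝ
    (fun p q => ∫ x : EuclideanSpace ℝ ι in Metric.closedBall 0 ρ, eval x.ofLp p * eval x.ofLp q)
    (fun p₁ p₂ q => by simp only [eval_add, add_mul, integral_add (hint p₁ q) (hint p₂ q)])
    (fun a p q => by simp only [smul_eval, mul_assoc, integral_const_mul, smul_eq_mul])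
    (fun p q₁ q₂ => by simp only [eval_add, mul_add, integral_add (hint p q₁) (hint p q₂)])
    (fun a p q => by
      simp only [smul_eval, mul_left_comm _ a, integral_const_mul, smul_eq_mul])

theorem ballForm_self (ρ : ℝ) (p : MvPolynomial ι ℝ) :
    ballForm ι ρ p p = ∫ x : EuclideanSpace ℝ ι in Metric.closedBall 0 ρ, eval x.ofLp p ^ 2 := by
  simp only [ballForm, LinearMap.mk₂_apply, sq]

theorem ballForm_smul_self (ρ a : ℝ) (p : MvPolynomial ι ℝ) :
    ballForm ι ρ (a • p) (a • p) = a ^ 2 * ballForm ι ρ p p := by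
  simp only [map_smul, LinearMap.smul_apply, smul_eq_mul, sq, mul_assoc]

theorem ballForm_isSymm (ρ : ℝ) : (ballForm ι ρ).IsSymm :=
  ⟨fun p q => by simp only [ballForm, LinearMap.mk₂_apply, mul_comm]⟩

theorem ballForm_self_pos {ρ : ℝ} (hρ : 0 < ρ) {p : MvPolynomial ι ℝ} (hp : p ≠ 0) :
    0 < ballForm ι ρ p p := by
  obtain ⟨x, hx, hxp⟩ := exists_mem_ball_eval_ofLp_ne_zero hρ hp
  have hcont := (continuous_eval_ofLp p).pow 2
  rw [ballForm_self, setIntegral_pos_iff_support_of_nonneg_ae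
    (Filter.Eventually.of_forall fun x => sq_nonneg _)
    (hcont.continuousOn.integrableOn_compact (isCompact_closedBall _ _))]
  exact ((hcont.isOpen_support.inter Metric.isOpen_ball).measure_pos volume
    ⟨x, pow_ne_zero 2 hxp, hx⟩).trans_le
    (measure_mono (Set.inter_subset_inter_right _ Metric.ball_subset_closedBall))

theorem setIntegral_closedBall_eval_sq (c : EuclideanSpace ℝ ι) {r : ℝ} (hr : 0 < r) (ρ : ℝ)
    (p : MvPolynomial ι ℝ) :
    ∫ x in Metric.closedBall c (r * ρ), eval x.ofLp p ^ 2 =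
      r ^ Fintype.card ι *
        ballForm ι ρ (affineSubst r c.ofLp p) (affineSubst r c.ofLp p) := by
  have hball : (· + c) ⁻¹' Metric.closedBall c (r * ρ) =
      r • Metric.closedBall (0 : EuclideanSpace ℝ ι) ρ := by
    rw [smul_closedBall' hr.ne', Real.norm_of_nonneg hr.le, smul_zero]
    ext
    simp
  have hscale := Measure.setIntegral_comp_smul_of_pos volume
    (fun x : EuclideanSpace ℝ ι => eval (x + c).ofLp p ^ 2) (Metric.closedBall 0 ρ) hr
  simp only [finrank_euclideanSpace, smul_eq_mul, WithLp.ofLp_add, WithLp.ofLp_smul] at hscale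
  rw [← (measurePreserving_add_right volume c).setIntegral_preimage_emb
    (measurableEmbedding_addRight c), hball, ballForm_self]
  simp only [eval_affineSubst, WithLp.ofLp_add, hscale]
  rw [mul_inv_cancel_left₀ (pow_pos hr _).ne']

theorem exists_apply_self_le_ballForm {ρ : ℝ} (hρ : 0 < ρ)
    (A : LinearMap.BilinForm ℝ (MvPolynomial ι ℝ))
    (T : MvPolynomial ι ℝ →ₗ[ℝ] MvPolynomial ι ℝ) (V : Submodule ℝ (MvPolynomial ι ℝ))
    [Module.Finite ℝ V] (hT : ∀ p ∈ V, T p = 0 → p = 0) :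
    ∃ C : ℝ, 0 < C ∧ ∀ p ∈ V, A p p ≤ C * ballForm ι ρ (T p) (T p) := by
  obtain ⟨C, hC, h⟩ := exists_apply_self_le_of_posDef (A.compl₁₂ V.subtype V.subtype)
    (B := (ballForm ι ρ).compl₁₂ (T ∘ₗ V.subtype) (T ∘ₗ V.subtype))
    ⟨fun p q => (ballForm_isSymm ρ).eq (T p) (T q)⟩
    (fun p hp => ballForm_self_pos hρ fun h => hp (Subtype.ext (hT p p.2 h)))
  exact ⟨C, hC, fun p hp => h ⟨p, hp⟩⟩

theorem exists_ballForm_lapPoly_le {ρ : ℝ} (hρ : 0 < ρ) (n : ℕ) :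
    ∃ C : ℝ, 0 < C ∧ ∀ p : MvPolynomial ι ℝ, p.totalDegree ≤ n →
      ballForm ι 1 (lapPoly p) (lapPoly p) ≤ C * ballForm ι ρ p p := by
  obtain ⟨C, hC, h⟩ := exists_apply_self_le_ballForm hρ ((ballForm ι 1).compl₁₂ lapPoly lapPoly)
    LinearMap.id (restrictTotalDegree ι ℝ n) fun _ _ => id
  exact ⟨C, hC, fun p hp => h p ((mem_restrictTotalDegree _ _ _).2 hp)⟩

theorem exists_ballForm_le_lapPoly {ρ : ℝ} (hρ : 0 < ρ) (n : ℕ) :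
    ∃ C : ℝ, 0 < C ∧ ∀ q : MvPolynomial ι ℝ, q.totalDegree ≤ n →
      let p := normSqPoly ι ℝ * q
      ∑ i, ballForm ι 1 (pderiv i p) (pderiv i p) + ballForm ι 1 p p ≤
        C * ballForm ι ρ (lapPoly p) (lapPoly p) := by
  obtain ⟨C, hC, h⟩ := exists_apply_self_le_ballForm hρ
    (∑ i, (ballForm ι 1).compl₁₂ (pderiv i).toLinearMap (pderiv i).toLinearMap + ballForm ι 1)
    lapPoly ((restrictTotalDegree ι ℝ n).map (LinearMap.mulLeft ℝ (normSqPoly ι ℝ))) (by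
      rintro _ ⟨q, -, rfl⟩
      exact normSqPoly_mul_eq_zero_of_lapPoly_eq_zero)
  refine ⟨C, hC, fun q hq => ?_⟩
  simpa using h _ (Submodule.mem_map_of_mem ((mem_restrictTotalDegree _ _ _).2 hq))

end BallForm

/-- Shape regularity with ratio `ρ`, for the measure `μ` with which an element is integrated:
`μ` lies between the Lebesgue measures of the concentric balls of radii `r * ρ` and `r`. For
Lebesgue measure restricted to `K`, this follows from the inclusions of the balls. -/
structure IsShapeRegular {ι : Type*} [Fintype ι] (μ : Measure (EuclideanSpace ℝ ι))
    (c : EuclideanSpace ℝ ι) (ρ r : ℝ) : Prop where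
  radius_pos : 0 < r
  restrict_le : volume.restrict (Metric.closedBall c (r * ρ)) ≤ μ
  le_restrict : μ ≤ volume.restrict (Metric.closedBall c r)

namespace IsShapeRegular

variable {ι : Type*} [Fintype ι] {μ : Measure (EuclideanSpace ℝ ι)} {c : EuclideanSpace ℝ ι}
  {ρ r : ℝ}

theorem integrable_of_continuous (h : IsShapeRegular μ c ρ r) {f : EuclideanSpace ℝ ι → ℝ}
    (hf : Continuous f) : Integrable f μ :=
  Integrable.mono_measure (hf.continuousOn.integrableOn_compact (isCompact_closedBall c r))
    h.le_restrict

theorem integral_eval_sq_le (h : IsShapeRegular μ c ρ r) (p : MvPolynomial ι ℝ) :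
    ∫ x, eval x.ofLp p ^ 2 ∂μ ≤
      r ^ Fintype.card ι * ballForm ι 1 (affineSubst r c.ofLp p) (affineSubst r c.ofLp p) := by
  rw [← setIntegral_closedBall_eval_sq c h.radius_pos, mul_one]
  exact integral_mono_measure h.le_restrict (Filter.Eventually.of_forall fun _ => sq_nonneg _)
    (((continuous_eval_ofLp p).pow 2).continuousOn.integrableOn_compact (isCompact_closedBall c r))

theorem le_integral_eval_sq (h : IsShapeRegular μ c ρ r) (p : MvPolynomial ι ℝ) :
    r ^ Fintype.card ι * ballForm ι ρ (affineSubst r c.ofLp p) (affineSubst r c.ofLp p) ≤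
      ∫ x, eval x.ofLp p ^ 2 ∂μ := by
  rw [← setIntegral_closedBall_eval_sq c h.radius_pos]
  exact integral_mono_measure h.restrict_le (Filter.Eventually.of_forall fun _ => sq_nonneg _)
    (h.integrable_of_continuous ((continuous_eval_ofLp p).pow 2))

end IsShapeRegular

section ScaledEnergy

variable {d : ℕ}

/-- The squared scaled `H¹` norm `h⁻² ‖∇u‖² + h⁻⁴ ‖u‖²`, with `L²` norms taken in `μ`. -/
noncomputable def scaledEnergy (μ : Measure (EuclideanSpace ℝ (Fin d))) (h : ℝ)
    (u : EuclideanSpace ℝ (Fin d) → ℝ) : ℝ :=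
  h ^ (-2 : ℤ) * ∫ x, gradSq u x ∂μ + h ^ (-4 : ℤ) * ∫ x, u x ^ 2 ∂μ

theorem scaledEnergy_le_of_le (μ : Measure (EuclideanSpace ℝ (Fin d)))
    (u : EuclideanSpace ℝ (Fin d) → ℝ) {s t b : ℝ} (hs : 0 < s) (ht : 0 < t) (hst : s ≤ b * t) :
    scaledEnergy μ t u ≤ (b ^ 2 + b ^ 4) * scaledEnergy μ s u := by
  have hG : 0 ≤ ∫ x, gradSq u x ∂μ := integral_nonneg fun x => gradSq_nonneg u x
  have hU : 0 ≤ ∫ x, u x ^ 2 ∂μ := integral_nonneg fun x => sq_nonneg _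
  have hinv : t⁻¹ ≤ b * s⁻¹ := by
    rwa [← div_eq_mul_inv, le_div_iff₀ hs, inv_mul_le_iff₀ ht, mul_comm]
  have hpow (k : ℕ) : t ^ (-k : ℤ) ≤ b ^ k * s ^ (-k : ℤ) := by
    simpa only [mul_pow, inv_pow, zpow_neg, zpow_natCast] using
      pow_le_pow_left₀ (inv_nonneg.2 ht.le) hinv k
  have h2 : t ^ (-2 : ℤ) ≤ b ^ 2 * s ^ (-2 : ℤ) := hpow 2
  have h4 : t ^ (-4 : ℤ) ≤ b ^ 4 * s ^ (-4 : ℤ) := hpow 4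
  calc scaledEnergy μ t u
      ≤ b ^ 2 * s ^ (-2 : ℤ) * (∫ x, gradSq u x ∂μ) + b ^ 4 * s ^ (-4 : ℤ) * ∫ x, u x ^ 2 ∂μ := by
        unfold scaledEnergy; gcongr
    _ ≤ b ^ 2 * s ^ (-2 : ℤ) * (∫ x, gradSq u x ∂μ) + b ^ 4 * s ^ (-4 : ℤ) * (∫ x, u x ^ 2 ∂μ) +
          (b ^ 4 * s ^ (-2 : ℤ) * (∫ x, gradSq u x ∂μ) +
            b ^ 2 * s ^ (-4 : ℤ) * ∫ x, u x ^ 2 ∂μ) :=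
        le_add_of_nonneg_right (add_nonneg (mul_nonneg (by positivity) hG)
          (mul_nonneg (by positivity) hU))
    _ = (b ^ 2 + b ^ 4) * scaledEnergy μ s u := by unfold scaledEnergy; ring

theorem inv_fourth_mul_integral_sq_le_scaledEnergy (μ : Measure (EuclideanSpace ℝ (Fin d)))
    (u : EuclideanSpace ℝ (Fin d) → ℝ) (h : ℝ) :
    h ^ (-4 : ℤ) * ∫ x, u x ^ 2 ∂μ ≤ scaledEnergy μ h u :=
  le_add_of_nonneg_left (mul_nonneg (Even.zpow_nonneg (by decide) h)
    (integral_nonneg fun x => gradSq_nonneg u x))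

end ScaledEnergy

namespace IsShapeRegular

variable {d : ℕ} {μ : Measure (EuclideanSpace ℝ (Fin d))} {c : EuclideanSpace ℝ (Fin d)} {ρ r : ℝ}

theorem integral_gradSq_eval (h : IsShapeRegular μ c ρ r) (p : MvPolynomial (Fin d) ℝ) :
    ∫ x, gradSq (fun y => eval y.ofLp p) x ∂μ = ∑ i, ∫ x, eval x.ofLp (pderiv i p) ^ 2 ∂μ := by
  simp only [gradSq_eval_ofLp]
  exact integral_finsetSum _ fun i _ =>
    h.integrable_of_continuous ((continuous_eval_ofLp _).pow 2)

theorem scaledEnergy_eval_le (h : IsShapeRegular μ c ρ r) (p : MvPolynomial (Fin d) ℝ) :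
    let p' := affineSubst r c.ofLp p
    scaledEnergy μ r (fun x => eval x.ofLp p) ≤ r ^ (d - 4 : ℤ) *
      (∑ i, ballForm (Fin d) 1 (pderiv i p') (pderiv i p') + ballForm (Fin d) 1 p' p') := by
  have hr := h.radius_pos
  intro p'
  have hint (q : MvPolynomial (Fin d) ℝ) := h.integral_eval_sq_le q
  simp only [Fintype.card_fin] at hint
  calc scaledEnergy μ r (fun x => eval x.ofLp p)
      ≤ r ^ (-2 : ℤ) * ∑ i, r ^ d * ballForm (Fin d) 1 (affineSubst r c.ofLp (pderiv i p))
            (affineSubst r c.ofLp (pderiv i p)) +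
          r ^ (-4 : ℤ) * (r ^ d * ballForm (Fin d) 1 p' p') := by
        rw [scaledEnergy, h.integral_gradSq_eval]
        gcongr <;> apply hint
    _ = _ := by
        simp only [p', pderiv_affineSubst, ballForm_smul_self, ← Finset.mul_sum]
        rw [zpow_sub₀ hr.ne', zpow_neg, zpow_neg]
        norm_cast
        field_simp

theorem integral_lap_eval_sq_le (h : IsShapeRegular μ c ρ r) (p : MvPolynomial (Fin d) ℝ) :
    let p' := affineSubst r c.ofLp p
    ∫ x, lap (fun y => eval y.ofLp p) x ^ 2 ∂μ ≤
      r ^ (d - 4 : ℤ) * ballForm (Fin d) 1 (lapPoly p') (lapPoly p') := by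
  have hr := h.radius_pos
  simp only [lap_eval_ofLp, lapPoly_affineSubst, ballForm_smul_self]
  refine (h.integral_eval_sq_le _).trans_eq ?_
  rw [Fintype.card_fin, zpow_sub₀ hr.ne']
  norm_cast
  field_simp

theorem le_integral_lap_eval_sq (h : IsShapeRegular μ c ρ r) (p : MvPolynomial (Fin d) ℝ) :
    let p' := affineSubst r c.ofLp p
    r ^ (d - 4 : ℤ) * ballForm (Fin d) ρ (lapPoly p') (lapPoly p') ≤
      ∫ x, lap (fun y => eval y.ofLp p) x ^ 2 ∂μ := by
  have hr := h.radius_pos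
  simp only [lap_eval_ofLp, lapPoly_affineSubst, ballForm_smul_self]
  refine Eq.trans_le ?_ (h.le_integral_eval_sq _)
  rw [Fintype.card_fin, zpow_sub₀ hr.ne']
  norm_cast
  field_simp

end IsShapeRegular

theorem exists_integral_lap_sq_le (d n : ℕ) {ρ : ℝ} (hρ : 0 < ρ) :
    ∃ C : ℝ, 0 < C ∧ ∀ (μ : Measure (EuclideanSpace ℝ (Fin d))) (c : EuclideanSpace ℝ (Fin d))
      (r : ℝ), IsShapeRegular μ c ρ r → ∀ p : MvPolynomial (Fin d) ℝ, p.totalDegree ≤ n →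
        ∫ x, lap (fun y => eval y.ofLp p) x ^ 2 ∂μ ≤
          C * scaledEnergy μ r fun x => eval x.ofLp p := by
  obtain ⟨C, hC, hle⟩ := exists_ballForm_lapPoly_le (ι := Fin d) hρ n
  refine ⟨C, hC, fun μ c r h p hp => ?_⟩
  have hr := h.radius_pos
  set p' := affineSubst r c.ofLp p
  calc ∫ x, lap (fun y => eval y.ofLp p) x ^ 2 ∂μ
      ≤ r ^ (d - 4 : ℤ) * ballForm (Fin d) 1 (lapPoly p') (lapPoly p') :=
        h.integral_lap_eval_sq_le p
    _ ≤ r ^ (d - 4 : ℤ) * (C * ballForm (Fin d) ρ p' p') := by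
        gcongr
        exact hle p' ((totalDegree_affineSubst_le _ _ p).trans hp)
    _ = C * (r ^ (-4 : ℤ) * (r ^ d * ballForm (Fin d) ρ p' p')) := by
        rw [sub_eq_neg_add, zpow_add₀ hr.ne', zpow_natCast]
        ring
    _ ≤ C * (r ^ (-4 : ℤ) * ∫ x, eval x.ofLp p ^ 2 ∂μ) := by
        gcongr
        simpa only [Fintype.card_fin] using h.le_integral_eval_sq p
    _ ≤ C * scaledEnergy μ r fun x => eval x.ofLp p := by
        gcongr
        exact inv_fourth_mul_integral_sq_le_scaledEnergy _ _ _

/-- The polynomial `x ↦ ‖x - c‖ ^ 2 * q x`; as `q` varies these form the space `|x - c|² ℙ`. -/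
noncomputable def normSqSubMul {ι : Type*} [Fintype ι] (c : EuclideanSpace ℝ ι)
    (q : MvPolynomial ι ℝ) : MvPolynomial ι ℝ :=
  affineSubst 1 (-c.ofLp) (normSqPoly ι ℝ) * q

section NormSqSubMul

variable {ι : Type*} [Fintype ι]

theorem eval_normSqSubMul (c x : EuclideanSpace ℝ ι) (q : MvPolynomial ι ℝ) :
    eval x.ofLp (normSqSubMul c q) = ‖x - c‖ ^ 2 * eval x.ofLp q := by
  rw [normSqSubMul, eval_mul, eval_affineSubst, one_smul, ← sub_eq_add_neg, ← WithLp.ofLp_sub,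
    eval_ofLp_normSqPoly]

theorem totalDegree_normSqSubMul_le (c : EuclideanSpace ℝ ι) (q : MvPolynomial ι ℝ) :
    (normSqSubMul c q).totalDegree ≤ 2 + q.totalDegree :=
  (totalDegree_mul _ _).trans (Nat.add_le_add_right
    ((totalDegree_affineSubst_le _ _ _).trans totalDegree_normSqPoly_le) _)

theorem affineSubst_normSqSubMul (r : ℝ) (c : EuclideanSpace ℝ ι) (q : MvPolynomial ι ℝ) :
    affineSubst r c.ofLp (normSqSubMul c q) =
      normSqPoly ι ℝ * (r ^ 2 • affineSubst r c.ofLp q) := by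
  rw [normSqSubMul, map_mul, affineSubst_affineSubst_neg_normSqPoly, smul_mul_assoc,
    mul_smul_comm]

end NormSqSubMul

theorem exists_scaledEnergy_le_integral_lap_sq (d n : ℕ) {ρ : ℝ} (hρ : 0 < ρ) :
    ∃ C : ℝ, 0 < C ∧ ∀ (μ : Measure (EuclideanSpace ℝ (Fin d))) (c : EuclideanSpace ℝ (Fin d))
      (r : ℝ), IsShapeRegular μ c ρ r → ∀ q : MvPolynomial (Fin d) ℝ, q.totalDegree ≤ n →
        scaledEnergy μ r (fun x => eval x.ofLp (normSqSubMul c q)) ≤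
          C * ∫ x, lap (fun y => eval y.ofLp (normSqSubMul c q)) x ^ 2 ∂μ := by
  obtain ⟨C, hC, hle⟩ := exists_ballForm_le_lapPoly (ι := Fin d) hρ n
  refine ⟨C, hC, fun μ c r h q hq => ?_⟩
  have hr := h.radius_pos
  set p := affineSubst r c.ofLp (normSqSubMul c q) with hp
  have href : ∑ i, ballForm (Fin d) 1 (pderiv i p) (pderiv i p) + ballForm (Fin d) 1 p p ≤
      C * ballForm (Fin d) ρ (lapPoly p) (lapPoly p) := by
    rw [hp, affineSubst_normSqSubMul]
    exact hle _ ((totalDegree_smul_le _ _).trans ((totalDegree_affineSubst_le _ _ q).trans hq))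
  calc scaledEnergy μ r (fun x => eval x.ofLp (normSqSubMul c q))
      ≤ r ^ (d - 4 : ℤ) * (∑ i, ballForm (Fin d) 1 (pderiv i p) (pderiv i p) +
          ballForm (Fin d) 1 p p) := h.scaledEnergy_eval_le _
    _ ≤ r ^ (d - 4 : ℤ) * (C * ballForm (Fin d) ρ (lapPoly p) (lapPoly p)) := by gcongr
    _ = C * (r ^ (d - 4 : ℤ) * ballForm (Fin d) ρ (lapPoly p) (lapPoly p)) := mul_left_comm _ _ _
    _ ≤ C * ∫ x, lap (fun y => eval y.ofLp (normSqSubMul c q)) x ^ 2 ∂μ := by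
        gcongr
        exact h.le_integral_lap_eval_sq _

theorem stmt10_general (d n : ℕ) {c₀ : ℝ} (hc₀ : 0 < c₀) :
    ∃ c C : ℝ, 0 < c ∧ 0 < C ∧
      ∀ (μ : Measure (EuclideanSpace ℝ (Fin d))) (xK : EuclideanSpace ℝ (Fin d)) (r₁ r₂ h : ℝ),
        0 < r₁ → c₀ * r₂ ≤ r₁ →
        volume.restrict (Metric.closedBall xK r₁) ≤ μ →
        μ ≤ volume.restrict (Metric.closedBall xK r₂) →
        Metric.diam (Metric.closedBall xK r₁) ≤ h → h ≤ Metric.diam (Metric.closedBall xK r₂) →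
        ∀ q : MvPolynomial (Fin d) ℝ, q.totalDegree ≤ n →
          let u : EuclideanSpace ℝ (Fin d) → ℝ := fun x => ‖x - xK‖ ^ 2 * eval x.ofLp q
          c * scaledEnergy μ h u ≤ ∫ x, lap u x ^ 2 ∂μ ∧
            ∫ x, lap u x ^ 2 ∂μ ≤ C * scaledEnergy μ h u := by
  rcases isEmpty_or_nonempty (Fin d) with hd | hd
  · refine ⟨1, 1, one_pos, one_pos, fun μ xK r₁ r₂ h _ _ _ _ _ _ q _ => ?_⟩
    have hx (x : EuclideanSpace ℝ (Fin d)) : x - xK = 0 := Subsingleton.elim _ _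
    simp [scaledEnergy, lap, gradSq, hx]
  obtain ⟨C₁, hC₁, hlower⟩ := exists_scaledEnergy_le_integral_lap_sq d n hc₀
  obtain ⟨C₂, hC₂, hupper⟩ := exists_integral_lap_sq_le d (2 + n) hc₀
  set b := (2 * c₀)⁻¹
  refine ⟨((b ^ 2 + b ^ 4) * C₁)⁻¹, C₂ * (2 ^ 2 + 2 ^ 4), by positivity, by positivity, ?_⟩
  intro μ xK r₁ r₂ h hr₁ hr hμ₁ hμ₂ hh₁ hh₂ q hq u
  rw [Metric.diam_closedBall_eq xK hr₁.le] at hh₁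
  have hr₂ : 0 < r₂ := by
    by_contra! hr₂
    rw [Metric.diam_subsingleton (Metric.subsingleton_closedBall xK hr₂)] at hh₂
    linarith
  rw [Metric.diam_closedBall_eq xK hr₂.le] at hh₂
  have hh : 0 < h := by linarith
  have hreg : IsShapeRegular μ xK c₀ r₂ := ⟨hr₂, (Measure.restrict_mono_set _
    (Metric.closedBall_subset_closedBall (by linarith))).trans hμ₁, hμ₂⟩
  have hu : u = fun x => eval x.ofLp (normSqSubMul xK q) :=
    funext fun x => (eval_normSqSubMul xK x q).symm
  have hrh : r₂ ≤ b * h := by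
    rw [le_inv_mul_iff₀ (by positivity)]
    linarith
  rw [hu, inv_mul_le_iff₀ (by positivity), mul_assoc, mul_assoc]
  constructor
  · refine (scaledEnergy_le_of_le μ _ hr₂ hh hrh).trans ?_
    gcongr
    exact hlower μ xK r₂ hreg q hq
  · refine (hupper μ xK r₂ hreg _ ((totalDegree_normSqSubMul_le xK q).trans (by gcongr))).trans ?_
    gcongr
    exact scaledEnergy_le_of_le μ _ hh hr₂ hh₂

/-- On a shape-regular element `K` (sandwiched between concentric balls of comparable
radii), for `u = |x − x_K|² q` with `deg q ≤ p − 2`, there holds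
`‖Δu‖² ≃ h_K⁻²‖∇u‖² + h_K⁻⁴‖u‖²`, with constants depending only on `d, p, c₀`. -/
theorem stmt10 (d p : ℕ) (c₀ : ℝ) (hc₀ : 0 < c₀) :
    ∃ c C : ℝ, 0 < c ∧ 0 < C ∧
      ∀ (K : Set (EuclideanSpace ℝ (Fin d))) (xK : EuclideanSpace ℝ (Fin d)) (r₁ r₂ : ℝ),
        MeasurableSet K → 0 < r₁ →
        Metric.closedBall xK r₁ ⊆ K → K ⊆ Metric.closedBall xK r₂ →
        c₀ * (2 * r₂) ≤ 2 * r₁ →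
        ∀ q : MvPolynomial (Fin d) ℝ, q.totalDegree ≤ p - 2 →
          let hK : ℝ := Metric.diam K
          let u : EuclideanSpace ℝ (Fin d) → ℝ :=
            fun x => ‖x - xK‖ ^ 2 * MvPolynomial.eval (fun i => x i) q
          c * (hK ^ (-2 : ℤ) * (∫ x in K, gradSq u x) +
                hK ^ (-4 : ℤ) * ∫ x in K, (u x) ^ 2) ≤
              (∫ x in K, (lap u x) ^ 2) ∧
            (∫ x in K, (lap u x) ^ 2) ≤
              C * (hK ^ (-2 : ℤ) * (∫ x in K, gradSq u x) +
                hK ^ (-4 : ℤ) * ∫ x in K, (u x) ^ 2) := by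
  obtain ⟨c, C, hc, hC, h⟩ := stmt10_general d (p - 2) hc₀
  refine ⟨c, C, hc, hC, fun K xK r₁ r₂ _ hr₁ hK₁ hK₂ hr q hq => ?_⟩
  exact h (volume.restrict K) xK r₁ r₂ (Metric.diam K) hr₁ (by linarith)
    (Measure.restrict_mono_set _ hK₁) (Measure.restrict_mono_set _ hK₂)
    (Metric.diam_mono hK₁ (Metric.isBounded_closedBall.subset hK₂))
    (Metric.diam_mono hK₂ Metric.isBounded_closedBall) q hq
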